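/- Let R, S, T be β(0,1)-trees with root(R) = open(R) = 1. Then μ_1(ν_1(R,S), T) = ν_1(μ_1(R,T), S). -/

import Mathlib

/-!
Both sides of the identity graft `R` onto the first open node of `T` and `S` onto the rightmost
leaf of the copy of `R`. The hypothesis `root(R) = 1` forces `R` to be nontrivial, so its root has
children (`children_ne_nil`). Hence, after `R` is attached as the last block of children of the
first open node of `T`, the rightmost path of the resulting tree ends with the rightmost path of
`R`, and attaching `S` at its end changes only the block coming from `R` (`nuL_append`). Moreover
`ν₁` adds zero to all labels, so the labels along `T` are unaffected. The identity
`muT_nuT_comm` follows by induction along the rightmost path of `T`.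
-/

/-- Labeled rooted plane trees: each node carries a natural-number label and an
ordered list of subtrees. -/
inductive BTree : Type
  | node : ℕ → List BTree → BTree
deriving Repr

namespace BTree

/-- The trivial β(0,1)-tree ε: a single node labeled 0. -/
def eps : BTree := node 0 []

/-- The label of the root of a tree. -/
def label : BTree → ℕ
  | node n _ => n

/-- The list of subtrees of the root. -/
def children : BTree → List BTree
  | node _ ts => ts

/-- The sum of the labels of the children of the root. -/
def childSum (t : BTree) : ℕ := (t.children.map label).sum

/-- Validity condition for non-root nodes of a β(0,1)-tree: leaves have label 0,
and the label of every node exceeds the sum of its children's labels by at most one. -/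
inductive ValidSub : BTree → Prop
  | mk (n : ℕ) (ts : List BTree) :
      (ts = [] → n = 0) →
      n ≤ (ts.map label).sum + 1 →
      (∀ t ∈ ts, ValidSub t) →
      ValidSub (node n ts)

/-- `t` is a β(0,1)-tree: the trivial tree is the single node labeled 0; otherwise the
root label is one more than the sum of its children's labels, and every non-root node
has label at most one more than the sum of its children's labels, leaves having label 0. -/
def IsBeta (t : BTree) : Prop :=
  (t.children = [] → t.label = 0) ∧
  (t.children ≠ [] → t.label = childSum t + 1) ∧
  ∀ c ∈ t.children, ValidSub c

mutual
/-- The rightmost path of a tree, from the root to the rightmost leaf; each node on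
the path is recorded together with its full subtree. -/
def rpath : BTree → List BTree
  | node n ts => node n ts :: rpathL ts
def rpathL : List BTree → List BTree
  | [] => []
  | [t] => rpath t
  | _ :: t :: ts => rpathL (t :: ts)
end

/-- A node is moderate if its label does not exceed the sum of its children's labels. -/
def moderate (t : BTree) : Bool := decide (t.label ≤ childSum t)

/-- A node (on the rightmost path) is open iff it is a leaf (i.e. it is the rightmost
leaf), or its rightmost child is a non-leaf moderate node. -/
def isOpenNode (t : BTree) : Bool :=
  match t.children.getLast? with
  | none => true
  | some c => !c.children.isEmpty && moderate c

/-- The statistic `root`: the label of the root. -/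
def rootStat (t : BTree) : ℕ := t.label

/-- The statistic `open`: the number of open nodes (all of which lie on the
rightmost path), with open(ε) = 0. -/
def openStat : BTree → ℕ
  | node 0 [] => 0
  | t => (rpath t).countP isOpenNode

/-- The statistic `rmod`: the number of moderate nodes on the rightmost path,
with rmod(ε) = 0. -/
def rmodStat : BTree → ℕ
  | node 0 [] => 0
  | t => (rpath t).countP moderate

mutual
/-- The number of nodes of a tree. -/
def size : BTree → ℕ
  | node _ ts => 1 + sizeL ts
def sizeL : List BTree → ℕ
  | [] => 0
  | t :: ts => size t + sizeL ts
end

mutual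
/-- The number of excessive nodes of a tree (nodes whose label exceeds the sum of the
labels of their children). -/
def excT : BTree → ℕ
  | node n ts => (if (ts.map label).sum < n then 1 else 0) + excL ts
def excL : List BTree → ℕ
  | [] => 0
  | t :: ts => excT t + excL ts
end

/-- The sum U ⊕ V of two trees: identify the two roots into a new root labeled
root(U) + root(V) − 1, its children being those of U followed by those of V. -/
def oplus (u v : BTree) : BTree := node (u.label + v.label - 1) (u.children ++ v.children)

/-- Relabel the root. -/
def setLabel (i : ℕ) (t : BTree) : BTree := node i t.children

/-- λ_i(T): join a new root, labeled i+1, by an edge to the old root, which is relabeled i. -/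
def lam (i : ℕ) (t : BTree) : BTree := node (i + 1) [setLabel i t]

/-- Iterated ⊕ of a list of trees (ε for the empty list). -/
def oplusList : List BTree → BTree
  | [] => eps
  | [t] => t
  | t :: ts => oplus t (oplusList ts)

/-- ρ(T₁,…,T_k) = λ₀(T₁) ⊕ ⋯ ⊕ λ₀(T_k). -/
def rho (Ts : List BTree) : BTree := oplusList (Ts.map (lam 0))

/-- Add one to the label of the root. -/
def incRoot (t : BTree) : BTree := node (t.label + 1) t.children

mutual
/-- Walk down the rightmost path of a tree looking for the i-th open node x, adding one
to each label on the way (through x, and through the rightmost child y of x if x is not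
a leaf); at x, append the children of S. -/
def muT (S : BTree) : ℕ → BTree → BTree
  | i, node n ts =>
    if isOpenNode (node n ts) && decide (i ≤ 1) then
      if ts.isEmpty then node (n + 1) S.children
      else node (n + 1) (ts.dropLast ++ [incRoot (ts.getLastD eps)] ++ S.children)
    else
      node (n + 1) (muL S (if isOpenNode (node n ts) then i - 1 else i) ts)
def muL (S : BTree) (i : ℕ) : List BTree → List BTree
  | [] => []
  | [t] => [muT S i t]
  | t :: ts => t :: muL S i ts
end

/-- μ_i(S,T): identify the i-th open node x on the rightmost path of T with the root of
S, keeping the label of x, and add one to each node on the rightmost path of T between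
the root and y (inclusive), where y = x if x is a leaf and otherwise y is the rightmost
child of x.  (In particular μ₁(S,ε) = S when root(S) = 1.) -/
def mu (i : ℕ) (S T : BTree) : BTree := muT S i T

mutual
/-- Walk down the rightmost path of a tree adding j to every label; at the rightmost
leaf, attach the children of T. -/
def nuT (T : BTree) (j : ℕ) : BTree → BTree
  | node n [] => node (n + j) T.children
  | node n ts => node (n + j) (nuL T j ts)
def nuL (T : BTree) (j : ℕ) : List BTree → List BTree
  | [] => []
  | [t] => [nuT T j t]
  | t :: ts => t :: nuL T j ts
end

/-- ν_i(S,T): identify the rightmost leaf x of S with the root of T, keeping the zero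
label of x, and add i − 1 to each node on the rightmost path of S between the root and
x (inclusive).  (In particular ν₁(S,ε) = S.) -/
def nu (i : ℕ) (S T : BTree) : BTree := nuT T (i - 1) S

/-- σ(T₁,…,T_k) = μ₁(ρ(T_{k−1},…,T₁,ε), T_k). -/
def sigma (Ts : List BTree) : BTree :=
  mu 1 (rho (Ts.dropLast.reverse ++ [eps])) (Ts.getLastD eps)

/-- The maximal suffix of a list of trees all of whose root labels are 0. -/
def zeroSuffix : List BTree → List BTree
  | [] => []
  | t :: ts =>
    let z := zeroSuffix ts
    if z.length = ts.length ∧ t.label = 0 then t :: z else z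

/-- Subtract one from the label of the root. -/
def decRoot (t : BTree) : BTree := node (t.label - 1) t.children

mutual
/-- Inverse of μ on β(0,1)-trees with root label > 1: walk down the rightmost path to
the parent x of the first node labeled 0 on the path (subtracting one from the labels
on the way); the maximal zero-labeled suffix of the children of x is the list of
children of S, the rest (with the label of its last element decremented) are the
children of x in T.  Returns the pair (T, S) such that the input is μ_i(S,T). -/
def decT : BTree → BTree × BTree
  | node n ts =>
    if (ts.getLastD eps).label = 0 then
      let zs := zeroSuffix ts
      let ps := ts.take (ts.length - zs.length)
      (node (n - 1) (if ps.isEmpty then [] else ps.dropLast ++ [decRoot (ps.getLastD eps)]),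
       node 1 zs)
    else
      (node (n - 1) (decL ts).1, (decL ts).2)
def decL : List BTree → List BTree × BTree
  | [] => ([], eps)
  | [t] => ([(decT t).1], (decT t).2)
  | t :: ts => (t :: (decL ts).1, (decL ts).2)
end

/-- Restore the root label of a β(0,1)-tree whose root label was forgotten:
ε for a single node, and otherwise one plus the sum of the children's labels. -/
def makeRoot : BTree → BTree
  | node _ [] => eps
  | node _ ts => node ((ts.map label).sum + 1) ts

/-- Fueled version of the map g.  A β(0,1)-tree with root label 1 is ρ(T₁,…,T_k) where
the Tⱼ are recovered from the children via `makeRoot`, and g maps it to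
σ(g(T₁),…,g(T_k)); a β(0,1)-tree U with root label > 1 is μ_i(S,T) where (T,S) = decT U
and i = open(U) + 1 − open(S) (since open(μ_i(S,T)) = i − 1 + open(S)), and g maps it
to ν_i(g(S),g(T)); finally g(ε) = ε. -/
def gF : ℕ → BTree → BTree
  | 0, t => t
  | fuel + 1, t =>
    match t with
    | node 0 _ => t
    | node 1 cs => sigma (cs.map fun c => gF fuel (makeRoot c))
    | node _ _ =>
      nu (openStat t + 1 - openStat (decT t).2) (gF fuel (decT t).2) (gF fuel (decT t).1)

/-- The map g on β(0,1)-trees: g(ε) = ε, g(ρ(T₁,…,T_k)) = σ(g(T₁),…,g(T_k)), and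
g(μ_i(S,T)) = ν_i(g(S), g(T)).  (The number of nodes suffices as fuel since all
recursive calls are on trees with strictly fewer nodes.) -/
def g (t : BTree) : BTree := gF (size t) t


/-- Only the last tree of a nonempty list is affected by attaching `S` at the rightmost leaf. -/
theorem nuL_cons (S : BTree) (j : ℕ) (a : BTree) {l : List BTree} (hl : l ≠ []) :
    nuL S j (a :: l) = a :: nuL S j l := by
  cases l with
  | nil => exact absurd rfl hl
  | cons b l => simp [nuL]

theorem muL_cons (R : BTree) (i : ℕ) (a : BTree) {l : List BTree} (hl : l ≠ []) :
    muL R i (a :: l) = a :: muL R i l := by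
  cases l with
  | nil => exact absurd rfl hl
  | cons b l => simp [muL]

theorem nuL_append (S : BTree) (j : ℕ) (l : List BTree) {m : List BTree} (hm : m ≠ []) :
    nuL S j (l ++ m) = l ++ nuL S j m := by
  induction l with
  | nil => rfl
  | cons a l ih => rw [List.cons_append, nuL_cons S j a (by simp [hm]), ih, List.cons_append]

theorem nuT_node (S : BTree) (j n : ℕ) {l : List BTree} (hl : l ≠ []) :
    nuT S j (node n l) = node (n + j) (nuL S j l) := by
  cases l with
  | nil => exact absurd rfl hl
  | cons b l => simp [nuT]

theorem muL_ne_nil (R : BTree) (i : ℕ) {l : List BTree} (hl : l ≠ []) : muL R i l ≠ [] := by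
  match l with
  | [] => exact absurd rfl hl
  | [t] => simp [muL]
  | t :: t' :: ts => simp [muL]

theorem children_nuT (S : BTree) (j : ℕ) {R : BTree} (hR : R.children ≠ []) :
    (nuT S j R).children = nuL S j R.children := by
  obtain ⟨n, l⟩ := R
  have hl : l ≠ [] := hR
  rw [nuT_node S j n hl]
  rfl

/-- A β(0,1)-tree with root label one is nontrivial. -/
theorem children_ne_nil {R : BTree} (hR : IsBeta R) (h : rootStat R = 1) : R.children ≠ [] := by
  intro hc
  have h0 : R.label = 0 := hR.1 hc
  have h1 : R.label = 1 := h
  omega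

mutual
/-- Attaching `S` to the rightmost leaf commutes with grafting `R` at the first open node of `T`,
for arbitrary labeled trees, as soon as the root of `R` has a child. -/
theorem muT_nuT_comm (R S : BTree) (hR : R.children ≠ []) :
    ∀ T : BTree, muT (nuT S 0 R) 1 T = nuT S 0 (muT R 1 T)
  | node n ts => by
    by_cases ho : isOpenNode (node n ts) = true
    · by_cases hts : ts = []
      · subst hts
        simp [muT, ho, children_nuT S 0 hR, nuT_node S 0 (n + 1) hR]
      · have hne : ts.dropLast ++ [incRoot (ts.getLastD eps)] ++ R.children ≠ [] := by simp
        rw [muT, muT]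
        simp only [ho, hts, le_refl, decide_true, Bool.and_self, if_true, List.isEmpty_iff,
          if_false]
        rw [nuT_node S 0 (n + 1) hne, nuL_append S 0 _ hR, children_nuT S 0 hR, Nat.add_zero]
    · -- A node without children is open, so `ts` is nonempty here.
      have hts : ts ≠ [] := by
        rintro rfl
        exact ho rfl
      simp only [muT, ho, Bool.false_and, Bool.false_eq_true, if_false]
      rw [nuT_node S 0 (n + 1) (muL_ne_nil R 1 hts), muL_nuL_comm R S hR ts, Nat.add_zero]
theorem muL_nuL_comm (R S : BTree) (hR : R.children ≠ []) :
    ∀ l : List BTree, muL (nuT S 0 R) 1 l = nuL S 0 (muL R 1 l)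
  | [] => by simp [muL, nuL]
  | [t] => by simp [muL, nuL, muT_nuT_comm R S hR t]
  | t :: t' :: ts => by
    have h := muL_nuL_comm R S hR (t' :: ts)
    have hne : muL R 1 (t' :: ts) ≠ [] := muL_ne_nil R 1 (by simp)
    rw [muL_cons _ 1 t (by simp), muL_cons _ 1 t (by simp), h, nuL_cons S 0 t hne]
end

/-- Let R, S, T be β(0,1)-trees with root(R) = open(R) = 1.  Then
μ₁(ν₁(R,S), T) = ν₁(μ₁(R,T), S). -/
theorem mu_nu_comm (R S T : BTree) (hR : IsBeta R) (hS : IsBeta S) (hT : IsBeta T)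
    (hrR : rootStat R = 1) (hoR : openStat R = 1) :
    mu 1 (nu 1 R S) T = nu 1 (mu 1 R T) S := by
  exact muT_nuT_comm R S (children_ne_nil hR hrR) T

end BTree
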